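/- Let g be a simple complex Lie algebra and N a simple weight g-module. Assume that for every root α ∈ R and every weight vector v ∈ N one has X_α X_{−α} v ∈ ℂv. Then N is a module of degree 1, i.e., every weight space of N is at most one-dimensional. -/

import Mathlib

/-- The weight space, for the weight `χ : H → ℂ`, of a module `N` over a complex Lie
algebra `g` with respect to a subalgebra `H` (a Cartan subalgebra in the applications).
Applying this to `N := g` with the adjoint action yields the root spaces of `g`. -/
def wtSpace {g : Type*} [LieRing g] [LieAlgebra ℂ g] (H : LieSubalgebra ℂ g)
    (N : Type*) [AddCommGroup N] [Module ℂ N] [LieRingModule g N] [LieModule ℂ g N]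
    (χ : H → ℂ) : Submodule ℂ N where
  carrier := {v | ∀ x : H, ⁅(x : g), v⁆ = χ x • v}
  add_mem' := by
    intro u v hu hv x
    rw [lie_add, hu x, hv x, smul_add]
  zero_mem' := by
    intro x
    rw [lie_zero, smul_zero]
  smul_mem' := by
    intro t v hv x
    rw [lie_smul, hv x, smul_comm]

open LieAlgebra LieModule LieAlgebra.IsKilling Set Submodule

/-!
Let `e i`, `f i` be Chevalley generators, and write `f_F`, `e_E` for the monomials attached to
words `F`, `E` in the simple roots. Since `⁅e i, f i⁆` lies in the Cartan subalgebra, the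
hypothesis makes both `e i f i` and `f i e i` act on every weight vector by a scalar. As `e i`
commutes with `f j` for `j ≠ i`, moving `e i` through `f_F` therefore only cancels a letter `f i`
up to a scalar. Two consequences follow for a nonzero vector `v` of weight `χ`: the span of the
vectors `f_F e_E v` is stable under the generators, hence is the whole simple module; and `f_F e_E
v` is a multiple of `v` as soon as `F` is a permutation of `E`. By linear independence of the
simple roots, the remaining vectors `f_F e_E v` have weights different from `χ`, so the weight
space of `χ` is spanned by `v`.
-/

section SimpleRootGenerators

variable {K L : Type*} [Field K] [CharZero K] [LieRing L] [LieAlgebra K L]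
  [FiniteDimensional K L] [IsKilling K L] {H : LieSubalgebra K L} [H.IsCartanSubalgebra]
  [IsTriangularizable K H L]

theorem exists_lie_ne_zero_of_coe_eq_add {α β γ : Weight K H L} (hα : α.IsNonZero)
    (hγ : (γ : H → K) = α + β) {h e f : L} (t : IsSl2Triple h e f)
    (he : e ∈ rootSpace H α) (hf : f ∈ rootSpace H (-α : H → K)) :
    ∃ x ∈ rootSpace H β, ⁅e, x⁆ ≠ 0 := by
  -- `y` lies at the bottom of the `α`-string through `β`, so it is primitive for the triple with
  -- `e` and `f` swapped, and the powers of `e` reach every root space of the string from it.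
  obtain ⟨y, hy, hy_ne⟩ := (chainTop (-α) β).exists_ne_zero
  have hf' : f ∈ rootSpace H ((-α : Weight K H L) : H → K) := by simpa using hf
  have hα' : (-α : Weight K H L).IsNonZero := by simpa using hα
  have primitive : t.symm.HasPrimitiveVectorWith y (chainLength (-α) β : K) := by
    refine ⟨hy_ne, ?_, ?_⟩
    · rw [chainLength_smul (-α) β hy, coroot_neg, t.h_eq_coroot hα he hf]
      rfl
    · have fy_mem := lie_mem_genWeightSpace_of_mem_genWeightSpace hf' hy
      rwa [genWeightSpace_add_chainTop _ _ hα'] at fy_mem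
  have one_le_top : (1 : ℤ) ≤ chainTopCoeff α β :=
    ((rootSpace_zsmul_add_ne_bot_iff α β hα 1).1 (by
      rw [one_smul, ← hγ]; exact γ.genWeightSpace_ne_bot)).1
  have bot_lt_length : chainBotCoeff α β < chainLength (-α) β := by
    rw [chainLength_neg, ← chainBotCoeff_add_chainTopCoeff]
    omega
  refine ⟨(toEnd K L L e ^ chainBotCoeff α β) y, ?_, ?_⟩
  · convert! toEnd_pow_apply_mem he hy (chainBotCoeff α β) using 2
    rw [coe_chainTop', Weight.coe_neg, chainTopCoeff_neg]
    simp
  · rw [primitive.lie_f_pow_toEnd_f]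
    exact primitive.pow_toEnd_f_ne_zero_of_eq_nat rfl bot_lt_length

theorem rootSpace_le_of_mem {α : Weight K H L} (hα : α.IsNonZero) {S : Submodule K L} {x : L}
    (hx : x ∈ rootSpace H α) (hx_ne : x ≠ 0) (hxS : x ∈ S) : (rootSpace H α).toSubmodule ≤ S := by
  intro y hy
  obtain ⟨c, hc⟩ := (finrank_eq_one_iff_of_nonzero' (⟨x, hx⟩ : rootSpace H α) (by simpa)).mp
    (finrank_rootSpace_eq_one α hα) ⟨y, hy⟩
  have hcy : c • x = y := congrArg Subtype.val hc
  exact hcy ▸ S.smul_mem c hxS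

theorem rootSpace_le_of_coe_eq_add {α β γ : Weight K H L} (hα : α.IsNonZero) (hγ₀ : γ.IsNonZero)
    (hγ : (γ : H → K) = α + β) {S : LieSubalgebra K L}
    (hαS : (rootSpace H α).toSubmodule ≤ S.toSubmodule)
    (hβS : (rootSpace H β).toSubmodule ≤ S.toSubmodule) :
    (rootSpace H γ).toSubmodule ≤ S.toSubmodule := by
  obtain ⟨h, e, f, t, he, hf⟩ := exists_isSl2Triple_of_weight_isNonZero hα
  obtain ⟨x, hx, hex⟩ := exists_lie_ne_zero_of_coe_eq_add hα hγ t he hf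
  refine rootSpace_le_of_mem hγ₀ ?_ hex (S.lie_mem (hαS he) (hβS hx))
  rw [hγ]
  exact lie_mem_genWeightSpace_of_mem_genWeightSpace he hx

theorem rootSpace_le_of_forall_mem_support (b : (rootSystem H).Base) {S : LieSubalgebra K L}
    (hS : ∀ i ∈ b.support, (rootSpace H i.1).toSubmodule ≤ S.toSubmodule ∧
      (rootSpace H (-i.1 : Weight K H L)).toSubmodule ≤ S.toSubmodule) (i : H.root) :
    (rootSpace H i.1).toSubmodule ≤ S.toSubmodule ∧
      (rootSpace H (-i.1 : Weight K H L)).toSubmodule ≤ S.toSubmodule := by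
  induction i using b.induction_add with
  | h₀ i hi =>
    have reflect_eq : ((rootSystem H).reflectionPerm i i).1 = -i.1 := by
      have := (rootSystem H).root_reflectionPerm i i
      rw [RootPairing.reflection_apply_self] at this
      exact Weight.ext fun z => LinearMap.congr_fun this z
    rw [reflect_eq, neg_neg]
    exact hi.symm
  | h₁ i hi => exact hS i hi
  | h₂ i j k hk hi hj =>
    have hk' : (k.1 : H → K) = j.1 + i.1 := by
      funext z
      simpa [add_comm] using LinearMap.congr_fun hk z
    have hj₀ := H.isNonZero_coe_root j
    have hk₀ := H.isNonZero_coe_root k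
    exact ⟨rootSpace_le_of_coe_eq_add hj₀ hk₀ hk' (hS j hj).1 hi.1,
      rootSpace_le_of_coe_eq_add (by simpa using hj₀) (by simpa using hk₀)
        (by simp [hk', add_comm]) (hS j hj).2 hi.2⟩

omit [CharZero K] [IsKilling K L] in
theorem lieSubalgebra_eq_top_of_rootSpace_le {S : LieSubalgebra K L} (hH : H ≤ S)
    (hS : ∀ i : H.root, (rootSpace H i.1).toSubmodule ≤ S.toSubmodule) : S = ⊤ := by
  rw [← LieSubalgebra.toSubmodule_eq_top, eq_top_iff,
    ← LieSubmodule.top_toSubmodule (R := K) (L := H), ← iSup_genWeightSpace_eq_top' K H L,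
    LieSubmodule.iSup_toSubmodule]
  refine iSup_le fun α => ?_
  by_cases hα : α.IsZero
  · intro x hx
    have x_mem_zero : x ∈ rootSpace H (0 : H → K) := hα.eq ▸ hx
    rw [rootSpace_zero_eq] at x_mem_zero
    exact hH (by simpa using x_mem_zero)
  · exact hS ⟨α, by simpa [LieSubalgebra.root] using hα⟩

theorem cartan_eq_lieSpan_coroot (b : (rootSystem H).Base) :
    H = LieSubalgebra.lieSpan K L (range fun i : b.support => (coroot i.1.1 : L)) := by
  refine le_antisymm ?_ (LieSubalgebra.lieSpan_le.mpr ?_)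
  · intro x hx
    have hx_span : (⟨x, hx⟩ : H) ∈ Submodule.span K ((rootSystem H).coroot '' b.support) := by
      simp [b.span_coroot_support]
    have := Submodule.mem_map_of_mem (f := H.toSubmodule.subtype) hx_span
    rw [Submodule.map_span] at this
    refine Submodule.span_le.mpr ?_ this
    rintro - ⟨-, ⟨i, hi, rfl⟩, rfl⟩
    exact LieSubalgebra.subset_lieSpan ⟨⟨i, hi⟩, rfl⟩
  · rintro - ⟨i, rfl⟩
    exact (coroot i.1.1).2

theorem lie_eq_zero_of_mem_support (b : (rootSystem H).Base) {i j : b.support} (hij : i ≠ j)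
    {e f : L} (he : e ∈ rootSpace H i.1.1) (hf : f ∈ rootSpace H (-j.1.1 : H → K)) :
    ⁅e, f⁆ = 0 := by
  have lie_mem := lie_mem_genWeightSpace_of_mem_genWeightSpace he hf
  by_contra lie_ne
  let γ : Weight K H L := ⟨i.1.1 + -j.1.1, fun h => lie_ne (by simpa [h] using lie_mem)⟩
  have hγ : γ.IsNonZero := fun h => hij <| Subtype.ext <| Subtype.ext <| Weight.ext fun z => by
    simpa [γ, sub_eq_zero, ← sub_eq_add_neg] using congrFun h z
  refine b.sub_notMem_range_root i.2 j.2 ⟨⟨γ, by simpa [LieSubalgebra.root] using hγ⟩, ?_⟩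
  ext z
  simp [γ, sub_eq_add_neg]

theorem lieSpan_simple_rootVectors_eq_top (b : (rootSystem H).Base) {h e f : b.support → L}
    (sl2 : ∀ i, IsSl2Triple (h i) (e i) (f i)) (he : ∀ i, e i ∈ rootSpace H i.1.1)
    (hf : ∀ i, f i ∈ rootSpace H (-i.1.1 : H → K)) :
    LieSubalgebra.lieSpan K L (range e ∪ range f) = ⊤ := by
  have e_mem (i) : e i ∈ LieSubalgebra.lieSpan K L (range e ∪ range f) :=
    LieSubalgebra.subset_lieSpan (.inl ⟨i, rfl⟩)
  have f_mem (i) : f i ∈ LieSubalgebra.lieSpan K L (range e ∪ range f) :=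
    LieSubalgebra.subset_lieSpan (.inr ⟨i, rfl⟩)
  have nonZero (i : b.support) := H.isNonZero_coe_root i.1
  have coroot_mem (i : b.support) :
      (coroot i.1.1 : L) ∈ LieSubalgebra.lieSpan K L (range e ∪ range f) := by
    rw [← (sl2 i).h_eq_coroot (nonZero i) (he i) (hf i), ← (sl2 i).lie_e_f]
    exact LieSubalgebra.lie_mem _ (e_mem i) (f_mem i)
  refine lieSubalgebra_eq_top_of_rootSpace_le (H := H) ?_ fun i =>
    (rootSpace_le_of_forall_mem_support b (fun j hj => ⟨?_, ?_⟩) i).1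
  · exact (cartan_eq_lieSpan_coroot b).trans_le
      (LieSubalgebra.lieSpan_le.mpr (range_subset_iff.mpr coroot_mem))
  · exact rootSpace_le_of_mem (nonZero ⟨j, hj⟩) (he ⟨j, hj⟩) (sl2 _).e_ne_zero (e_mem _)
  · exact rootSpace_le_of_mem (by simpa using nonZero ⟨j, hj⟩) (by simpa using hf ⟨j, hj⟩)
      (sl2 _).f_ne_zero (f_mem _)

theorem exists_lieAlgebraBasis (b : (rootSystem H).Base) :
    ∃ B : LieAlgebra.Basis b.support H,
      ∀ i, B.e i ∈ rootSpace H i.1.1 ∧ B.f i ∈ rootSpace H (-i.1.1 : H → K) := by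
  have nonZero (i : b.support) := H.isNonZero_coe_root i.1
  choose h e f sl2 he hf using
    fun i : b.support => exists_isSl2Triple_of_weight_isNonZero (nonZero i)
  have h_eq (i : b.support) : h i = coroot i.1.1 := (sl2 i).h_eq_coroot (nonZero i) (he i) (hf i)
  have pairing_smul (i j : b.support) (x : L) :
      i.1.1 (coroot j.1.1) • x = b.cartanMatrix i j • x := by
    rw [← rootSystem_pairing_apply, ← b.algebraMap_cartanMatrixIn_apply ℤ, algebraMap_int_eq,
      eq_intCast, Int.cast_smul_eq_zsmul]
  exact ⟨{
    A := b.cartanMatrix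
    h, e, f, sl2
    cartan_eq_lieSpan := funext h_eq ▸ cartan_eq_lieSpan_coroot b
    span_ef := lieSpan_simple_rootVectors_eq_top b sl2 he hf
    linInd := funext h_eq ▸ b.linearIndepOn_coroot.map' H.toSubmodule.subtype
      (Submodule.ker_subtype _)
    nondegen := b.cartanMatrix_nondegenerate
    lie_h_h i j := by
      rw [h_eq, h_eq, ← LieSubalgebra.coe_bracket, trivial_lie_zero, ZeroMemClass.coe_zero]
    lie_h_e i j := by
      rw [h_eq, ← pairing_smul]
      exact lie_eq_smul_of_mem_rootSpace (he i) (coroot j.1.1)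
    lie_h_f i j := by
      rw [h_eq, neg_smul, ← pairing_smul, ← neg_smul]
      exact lie_eq_smul_of_mem_rootSpace (hf i) (coroot j.1.1)
    lie_e_f_ne i j hij := lie_eq_zero_of_mem_support b hij (he i) (hf j) }, fun i => ⟨he i, hf i⟩⟩

end SimpleRootGenerators

theorem perm_of_linearIndependent_of_sum_map_eq {ι A : Type*} [AddCommMonoid A] {α : ι → A}
    (hα : LinearIndependent ℕ α) {F E : List ι} (h : (F.map α).sum = (E.map α).sum) :
    F.Perm E := by
  classical
  have linearCombination_eq (w : List ι) :
      Finsupp.linearCombination ℕ α (Multiset.toFinsupp (w : Multiset ι)) = (w.map α).sum := by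
    induction w with
    | nil => simp
    | cons i w ih => simp [← Multiset.cons_coe, ← Multiset.singleton_add, ih]
  rw [← linearCombination_eq, ← linearCombination_eq] at h
  exact Multiset.coe_eq_coe.mp (Multiset.toFinsupp.injective (hα h))

section WordAction

variable {ι R L M : Type*} [CommRing R] [LieRing L] [LieAlgebra R L] [AddCommGroup M] [Module R M]
  [LieRingModule L M] [LieModule R L M]

variable (R M) in
/-- The action on `M` of the monomial `x i₁ ⋯ x iₙ` of the enveloping algebra, for the word
`[i₁, …, iₙ]`. -/
def wordAction (x : ι → L) (w : List ι) : Module.End R M :=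
  (w.map fun i => toEnd R L M (x i)).prod

@[simp] theorem wordAction_nil (x : ι → L) (u : M) : wordAction R M x [] u = u := rfl

@[simp] theorem wordAction_cons (x : ι → L) (i : ι) (w : List ι) (u : M) :
    wordAction R M x (i :: w) u = ⁅x i, wordAction R M x w u⁆ := by
  simp [wordAction]

@[simp] theorem wordAction_append (x : ι → L) (w w' : List ι) (u : M) :
    wordAction R M x (w ++ w') u = wordAction R M x w (wordAction R M x w' u) := by
  simp [wordAction]

theorem lie_wordAction_of_forall_lie_eq_zero {x : ι → L} {y : L} {w : List ι}
    (h : ∀ i ∈ w, ⁅y, x i⁆ = 0) (u : M) :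
    ⁅y, wordAction R M x w u⁆ = wordAction R M x w ⁅y, u⁆ := by
  induction w with
  | nil => rfl
  | cons i w ih =>
    rw [List.forall_mem_cons] at h
    rw [wordAction_cons, wordAction_cons, leibniz_lie, h.1, zero_lie, zero_add, ih h.2]

theorem lie_wordAction_mem_span_erase [DecidableEq ι] {x : ι → L} {y : L} {i : ι} {u : M}
    (h_ne : ∀ j ≠ i, ⁅y, x j⁆ = 0)
    (h_eq : ∀ w, ⁅y, ⁅x i, wordAction R M x w u⁆⁆ ∈ R ∙ wordAction R M x w u)
    {w : List ι} (hi : i ∈ w) :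
    ⁅y, wordAction R M x w u⁆ ∈ R ∙ wordAction R M x (w.erase i) u := by
  induction w with
  | nil => simp at hi
  | cons j w ih =>
    rcases eq_or_ne j i with rfl | hj
    · simpa using h_eq w
    · obtain ⟨c, hc⟩ := mem_span_singleton.mp (ih (List.mem_of_ne_of_mem hj.symm hi))
      rw [wordAction_cons, leibniz_lie, h_ne j hj, zero_lie, zero_add, ← hc, lie_smul,
        List.erase_cons_tail (by simpa using hj), wordAction_cons]
      exact smul_mem _ c (mem_span_singleton_self _)

theorem wordAction_mem_weightSpace {H : LieSubalgebra R L}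
    {α : ι → H → R} {χ : H → R} {x : ι → L} (hx : ∀ i, x i ∈ weightSpace L (α i)) (w : List ι)
    {u : M} (hu : u ∈ weightSpace M χ) :
    wordAction R M x w u ∈ weightSpace M ((w.map α).sum + χ) := by
  induction w with
  | nil => simpa using hu
  | cons i w ih =>
    rw [mem_weightSpace] at ih ⊢
    intro h
    have hxi : ⁅(h : L), x i⁆ = α i h • x i := (mem_weightSpace _ _).mp (hx i) h
    have hw : ⁅(h : L), wordAction R M x w u⁆ = _ := ih h
    rw [LieSubalgebra.coe_bracket_of_module, wordAction_cons, leibniz_lie, hxi, hw, smul_lie,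
      lie_smul, ← add_smul, List.map_cons, List.sum_cons, add_assoc]
    rfl

theorem eq_top_of_forall_lie_mem [IsIrreducible R L M] {s : Set L}
    (hs : LieSubalgebra.lieSpan R L s = ⊤) {P : Submodule R M} (hP : P ≠ ⊥)
    (h : ∀ x ∈ s, ∀ m ∈ P, ⁅x, m⁆ ∈ P) : P = ⊤ := by
  have lie_mem (x : L) : ∀ m ∈ P, ⁅x, m⁆ ∈ P := by
    have hx : x ∈ LieSubalgebra.lieSpan R L s := hs ▸ LieSubalgebra.mem_top x
    induction hx using LieSubalgebra.lieSpan_induction with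
    | mem x hx => exact h x hx
    | zero => simp
    | add x y _ _ hx hy => exact fun m hm => add_lie x y m ▸ P.add_mem (hx m hm) (hy m hm)
    | smul c x _ hx => exact fun m hm => smul_lie c x m ▸ P.smul_mem c (hx m hm)
    | lie x y _ _ hx hy =>
      exact fun m hm => lie_lie x y m ▸ P.sub_mem (hx _ (hy m hm)) (hy _ (hx m hm))
  let N : LieSubmodule R L M := { P with lie_mem := fun hm => lie_mem _ _ hm }
  have N_ne_bot : N ≠ ⊥ := fun h => hP (congrArg LieSubmodule.toSubmodule h)
  exact congrArg LieSubmodule.toSubmodule ((eq_bot_or_eq_top N).resolve_left N_ne_bot)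

theorem iSupIndep_weightSpace [LieRing.IsNilpotent L] [IsDomain R] [Module.IsTorsionFree R M] :
    iSupIndep fun χ : L → R => (weightSpace M χ).toSubmodule :=
  LieSubmodule.iSupIndep_toSubmodule.mpr <|
    (iSupIndep_genWeightSpace R L M).mono fun χ => weightSpace_le_genWeightSpace M χ

end WordAction

section LieAlgebraBasis

variable {ι K L M : Type*} [Field K] [LieRing L] [LieAlgebra K L]
  [AddCommGroup M] [Module K M] [LieRingModule L M] [LieModule K L M]
  {H : LieSubalgebra K L}

section RootWeights

variable [Fintype ι] (B : LieAlgebra.Basis ι H)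

theorem e_mem_weightSpace (i : ι) : B.e i ∈ weightSpace L (B.baseSupp i : H → K) :=
  (mem_weightSpace _ _).mpr fun x => (B.baseSupp_apply_smul_e i x).symm

theorem f_mem_weightSpace (i : ι) : B.f i ∈ weightSpace L (-B.baseSupp i : H → K) :=
  (mem_weightSpace _ _).mpr fun x => by simp

theorem perm_of_sum_map_baseSupp_add_eq [CharZero K] {χ : H → K} {F E : List ι}
    (h : (F.map fun i => (-B.baseSupp i : H → K)).sum +
      ((E.map fun i => (B.baseSupp i : H → K)).sum + χ) = χ) : F.Perm E := by
  have linearIndependent_coe : LinearIndependent ℕ fun i => (B.baseSupp i : H → K) :=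
    (B.linearIndependent_baseSupp.map' (LinearMap.ltoFun K H K K)
      (LinearMap.ker_eq_bot.mpr DFunLike.coe_injective)).restrict_scalars' ℕ
  have sum_neg : (F.map fun i => (-B.baseSupp i : H → K)).sum =
      -(F.map fun i => (B.baseSupp i : H → K)).sum := by
    simpa using Multiset.sum_map_neg (m := (F : Multiset ι)) (f := fun i => (B.baseSupp i : H → K))
  rw [sum_neg, ← add_assoc, add_eq_right, neg_add_eq_zero] at h
  exact perm_of_linearIndependent_of_sum_map_eq linearIndependent_coe h

end RootWeights

variable [Finite ι] (B : LieAlgebra.Basis ι H) {χ : H → K}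

theorem lie_f_lie_e_mem_span {i : ι} {v : M} (hv : v ∈ weightSpace M χ)
    (h : ⁅B.e i, ⁅B.f i, v⁆⁆ ∈ K ∙ v) : ⁅B.f i, ⁅B.e i, v⁆⁆ ∈ K ∙ v := by
  have lie_h : ⁅B.h i, v⁆ = χ (B.h' i) • v := (mem_weightSpace _ _).mp hv (B.h' i)
  have : ⁅B.f i, ⁅B.e i, v⁆⁆ = ⁅B.e i, ⁅B.f i, v⁆⁆ - χ (B.h' i) • v := by
    rw [← lie_h, ← (B.sl2 i).lie_e_f, lie_lie, sub_sub_cancel]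
  exact this ▸ sub_mem h (smul_mem _ _ (mem_span_singleton_self v))

variable (hef : ∀ i (χ : H → K), ∀ v ∈ weightSpace M χ, ⁅B.e i, ⁅B.f i, v⁆⁆ ∈ K ∙ v)

include hef

theorem lie_e_wordAction_f_mem_span [DecidableEq ι] {u : M} (hu : u ∈ weightSpace M χ) {i : ι}
    {w : List ι} (hi : i ∈ w) :
    ⁅B.e i, wordAction K M B.f w u⁆ ∈ K ∙ wordAction K M B.f (w.erase i) u := by
  cases nonempty_fintype ι
  exact lie_wordAction_mem_span_erase (fun j hj => B.lie_e_f_ne i j hj.symm)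
    (fun w => hef i _ _ (wordAction_mem_weightSpace (f_mem_weightSpace B) w hu)) hi

theorem lie_f_wordAction_e_mem_span [DecidableEq ι] {u : M} (hu : u ∈ weightSpace M χ) {i : ι}
    {w : List ι} (hi : i ∈ w) :
    ⁅B.f i, wordAction K M B.e w u⁆ ∈ K ∙ wordAction K M B.e (w.erase i) u :=
  lie_e_wordAction_f_mem_span B.symm
    (fun i χ v hv => lie_f_lie_e_mem_span B hv (hef i χ v hv)) hu hi

theorem wordAction_f_wordAction_e_mem_span {v : M} (hv : v ∈ weightSpace M χ) {F E : List ι}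
    (h : F.Perm E) : wordAction K M B.f F (wordAction K M B.e E v) ∈ K ∙ v := by
  classical
  induction F using List.reverseRecOn generalizing E with
  | nil => simp [h.nil_eq.symm]
  | append_singleton F i ih =>
    obtain ⟨hi, hF⟩ :=
      List.cons_perm_iff_perm_erase.mp ((List.perm_append_singleton i F).symm.trans h)
    obtain ⟨c, hc⟩ := mem_span_singleton.mp (lie_f_wordAction_e_mem_span B hef hv hi)
    rw [wordAction_append, wordAction_cons, wordAction_nil, ← hc, map_smul]
    exact smul_mem _ c (ih hF)

theorem span_wordAction_eq_top [IsIrreducible K L M] {v : M} (hv : v ∈ weightSpace M χ)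
    (hv_ne : v ≠ 0) :
    span K (range fun w : List ι × List ι =>
      wordAction K M B.f w.1 (wordAction K M B.e w.2 v)) = ⊤ := by
  classical
  cases nonempty_fintype ι
  set P := span K (range fun w : List ι × List ι =>
    wordAction K M B.f w.1 (wordAction K M B.e w.2 v))
  have word_mem (F E : List ι) : wordAction K M B.f F (wordAction K M B.e E v) ∈ P :=
    subset_span ⟨(F, E), rfl⟩
  refine eq_top_of_forall_lie_mem B.span_ef (P.ne_bot_iff.mpr ⟨v, word_mem [] [], hv_ne⟩)
    fun x hx m hm => ?_
  suffices P ≤ P.comap (toEnd K L M x) from this hm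
  rw [span_le]
  rintro - ⟨⟨F, E⟩, rfl⟩
  rcases hx with ⟨i, rfl⟩ | ⟨i, rfl⟩
  · by_cases hi : i ∈ F
    · exact (span_singleton_le_iff_mem _ _).mpr (word_mem (F.erase i) E)
        (lie_e_wordAction_f_mem_span B hef
          (wordAction_mem_weightSpace (e_mem_weightSpace B) E hv) hi)
    · have lie_eq : ⁅B.e i, wordAction K M B.f F (wordAction K M B.e E v)⁆ =
          wordAction K M B.f F (wordAction K M B.e (i :: E) v) := by
        rw [wordAction_cons]
        exact lie_wordAction_of_forall_lie_eq_zero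
          (fun j hj => B.lie_e_f_ne i j fun h => hi (h ▸ hj)) _
      exact lie_eq.symm.subst (motive := (· ∈ P)) (word_mem F (i :: E))
  · exact (wordAction_cons B.f i F _).subst (motive := (· ∈ P)) (word_mem (i :: F) E)

theorem span_singleton_sup_iSup_weightSpace_eq_top [CharZero K] [IsIrreducible K L M] {v : M}
    (hv : v ∈ weightSpace M χ) (hv_ne : v ≠ 0) :
    (K ∙ v) ⊔ ⨆ (μ : H → K) (_ : μ ≠ χ), (weightSpace M μ).toSubmodule = ⊤ := by
  cases nonempty_fintype ι
  rw [eq_top_iff, ← span_wordAction_eq_top B hef hv hv_ne, span_le]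
  rintro - ⟨⟨F, E⟩, rfl⟩
  by_cases hFE : F.Perm E
  · exact mem_sup_left (wordAction_f_wordAction_e_mem_span B hef hv hFE)
  · have word_mem := wordAction_mem_weightSpace (f_mem_weightSpace B) F
      (wordAction_mem_weightSpace (e_mem_weightSpace B) E hv)
    exact mem_sup_right <| mem_iSup_of_mem _ <|
      mem_iSup_of_mem (mt (perm_of_sum_map_baseSupp_add_eq B) hFE) word_mem

theorem weightSpace_le_span_singleton [CharZero K] [IsIrreducible K L M] {v : M}
    (hv : v ∈ weightSpace M χ) (hv_ne : v ≠ 0) : (weightSpace M χ).toSubmodule ≤ K ∙ v := by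
  have := B.isLieAbelian_cartan
  have span_le_weightSpace : K ∙ v ≤ (weightSpace M χ).toSubmodule :=
    (span_singleton_le_iff_mem _ _).mpr hv
  have inf_eq_bot := (iSupIndep_weightSpace (R := K) (L := H) (M := M) χ).eq_bot
  refine (eq_of_le_of_inf_le_of_le_sup span_le_weightSpace (inf_eq_bot.trans_le bot_le) ?_).ge
  rw [span_singleton_sup_iSup_weightSpace_eq_top B hef hv hv_ne]
  exact le_top

theorem rank_weightSpace_le_one [CharZero K] [IsIrreducible K L M] (χ : H → K) :
    Module.rank K (weightSpace M χ) ≤ 1 := by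
  refine (rank_submodule_le_one_iff' (weightSpace M χ).toSubmodule).mpr ?_
  rcases eq_or_ne (weightSpace M χ).toSubmodule ⊥ with h | h
  · exact ⟨0, h.trans_le bot_le⟩
  · obtain ⟨v, hv, hv_ne⟩ := exists_mem_ne_zero_of_ne_bot h
    exact ⟨v, weightSpace_le_span_singleton B hef hv hv_ne⟩

end LieAlgebraBasis

theorem stmt_6_general {K L M : Type*} [Field K] [CharZero K] [LieRing L] [LieAlgebra K L]
    [FiniteDimensional K L] [IsKilling K L] {H : LieSubalgebra K L} [H.IsCartanSubalgebra]
    [IsTriangularizable K H L] [AddCommGroup M] [Module K M] [LieRingModule L M] [LieModule K L M]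
    [IsIrreducible K L M] (b : (rootSystem H).Base)
    (hyp : ∀ i ∈ b.support, ∀ x ∈ rootSpace H i.1, ∀ y ∈ rootSpace H (-i.1 : H → K),
      ∀ (χ : H → K), ∀ v ∈ weightSpace M χ, ⁅x, ⁅y, v⁆⁆ ∈ K ∙ v) (χ : H → K) :
    Module.rank K (weightSpace M χ) ≤ 1 := by
  obtain ⟨B, hB⟩ := exists_lieAlgebraBasis b
  exact rank_weightSpace_le_one B (fun i => hyp i i.2 _ (hB i).1 _ (hB i).2) χ

section WtSpace

variable {g : Type*} [LieRing g] [LieAlgebra ℂ g] {H : LieSubalgebra ℂ g}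

theorem wtSpace_eq_weightSpace (N : Type*) [AddCommGroup N] [Module ℂ N] [LieRingModule g N]
    [LieModule ℂ g N] (χ : H → ℂ) : wtSpace H N χ = (weightSpace N χ).toSubmodule :=
  Submodule.ext fun v => (mem_weightSpace χ v).symm

theorem wtSpace_eq_rootSpace [FiniteDimensional ℂ g] [IsKilling ℂ g] [H.IsCartanSubalgebra]
    (α : H → ℂ) : wtSpace H g α = (rootSpace H α).toSubmodule := by
  rw [wtSpace_eq_weightSpace]
  exact le_antisymm (weightSpace_le_genWeightSpace g α) fun x hx =>
    (mem_weightSpace α x).mpr (lie_eq_smul_of_mem_rootSpace hx)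

end WtSpace

/-- Let `g` be a simple complex Lie algebra with Cartan subalgebra `H`,
and let `N` be a simple weight `g`-module (`H`-diagonalizable with finite-dimensional
weight spaces, no nontrivial Lie submodule).  If for every root `α` (a nonzero `χ : H → ℂ`
whose adjoint weight space is nonzero), all root vectors `Xa ∈ g_α`, `Xma ∈ g_{-α}` and
every weight vector `v ∈ N` satisfy `X_α X_{-α} v ∈ ℂ v`, then `N` has degree `1`:
every weight space of `N` is at most one-dimensional. -/
theorem stmt_6
    (g : Type*) [LieRing g] [LieAlgebra ℂ g] [FiniteDimensional ℂ g]
    [LieAlgebra.IsSimple ℂ g]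
    (H : LieSubalgebra ℂ g) [H.IsCartanSubalgebra]
    (N : Type*) [AddCommGroup N] [Module ℂ N] [LieRingModule g N] [LieModule ℂ g N]
    [Nontrivial N]
    -- `N` is a weight module
    (hdiag : (⨆ χ : H → ℂ, wtSpace H N χ) = ⊤)
    (hfd : ∀ χ : H → ℂ, FiniteDimensional ℂ (wtSpace H N χ))
    -- `N` is simple
    (hsimple : ∀ q : LieSubmodule ℂ g N, q = ⊥ ∨ q = ⊤)
    -- for every root `α` and every weight vector `v`, `X_α X_{-α} v ∈ ℂ v`
    (hyp : ∀ α : H → ℂ, α ≠ 0 → wtSpace H g α ≠ ⊥ →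
      ∀ Xa ∈ wtSpace H g α, ∀ Xma ∈ wtSpace H g (-α),
        ∀ (χ : H → ℂ), ∀ v ∈ wtSpace H N χ, ∃ t : ℂ, ⁅Xa, ⁅Xma, v⁆⁆ = t • v) :
    ∀ χ : H → ℂ, Module.finrank ℂ (wtSpace H N χ) ≤ 1 := by
  obtain ⟨b⟩ := RootPairing.nonempty_base (rootSystem H)
  have irreducible : IsIrreducible ℂ g N := .mk fun q hq => (hsimple q).resolve_left hq
  simp only [wtSpace_eq_rootSpace, wtSpace_eq_weightSpace N] at hyp
  intro χ
  rw [wtSpace_eq_weightSpace]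
  refine Module.finrank_le_of_rank_le (stmt_6_general b (fun i _ x hx y hy μ v hv => ?_) χ)
  have rootSpace_ne_bot := (LieSubmodule.toSubmodule_eq_bot _).not.mpr i.1.genWeightSpace_ne_bot
  obtain ⟨t, ht⟩ := hyp i (H.isNonZero_coe_root i) rootSpace_ne_bot x hx y hy μ v hv
  exact mem_span_singleton.mpr ⟨t, ht.symm⟩
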